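/- Let p be a prime, q = 1/p, let μ ≥ 2 be an integer, and let n ≥ 3 be an odd integer. Then P(n, p^μ) = (1 − q^n)·P(n−2, p^μ) + q^n·P(n, p^{μ−2}). (When μ = 2 the last term vanishes automatically, since P(n, p^0) = P(n, 1) = 0.) -/

import Mathlib

/-- Number of symmetric `n × n` matrices over `ZMod m` with nonzero determinant. -/
noncomputable def Nsym (n m : ℕ) : ℕ :=
  Nat.card {A : Matrix (Fin n) (Fin n) (ZMod m) // A.IsSymm ∧ A.det ≠ 0}

/-- Proportion of symmetric `n × n` matrices over `ZMod m` with nonzero determinant. -/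
noncomputable def Psym (n m : ℕ) : ℝ :=
  (Nsym n m : ℝ) / (m : ℝ) ^ (n * (n + 1) / 2)

open Matrix

/-- Symmetric matrices. -/
abbrev SymMat (ι R : Type*) := {A : Matrix ι ι R // A.IsSymm}

noncomputable instance {ι R : Type*} [Finite ι] [Finite R] : Fintype (SymMat ι R) :=
  Fintype.ofFinite _

/-- The symmetric matrix with corner entry `a`, remaining first column `v` and remaining block `B`. -/
def bordered {ι R : Type*} (a : R) (v : ι → R) (B : Matrix ι ι R) :
    Matrix (Unit ⊕ ι) (Unit ⊕ ι) R :=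
  fromBlocks (of fun _ _ => a) (of fun _ j => v j) (of fun i _ => v i) B

theorem bordered_isSymm {ι R : Type*} (a : R) (v : ι → R) {B : Matrix ι ι R} (hB : B.IsSymm) :
    (bordered a v B).IsSymm :=
  IsSymm.fromBlocks (by ext; rfl) (by ext; rfl) hB

/-- Decomposition of a symmetric matrix into corner entry, border and remaining block. -/
def borderedEquiv (ι R : Type*) : R × (ι → R) × SymMat ι R ≃ SymMat (Unit ⊕ ι) R where
  toFun x := ⟨bordered x.1 x.2.1 x.2.2.1, bordered_isSymm _ _ x.2.2.2⟩
  invFun A := ⟨A.1 (.inl ()) (.inl ()), fun i => A.1 (.inr i) (.inl ()),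
    ⟨A.1.toBlocks₂₂, by ext i j; exact A.2.apply _ _⟩⟩
  left_inv x := rfl
  right_inv A := by
    refine Subtype.ext (Matrix.ext ?_)
    rintro (i | i) (j | j)
    · rfl
    · exact A.2.apply _ _
    · rfl
    · rfl

/-- Simultaneous relabelling of rows and columns. -/
def SymMat.reindex {ι κ : Type*} (R : Type*) (e : ι ≃ κ) : SymMat ι R ≃ SymMat κ R where
  toFun A := ⟨A.1.submatrix e.symm e.symm, A.2.submatrix _⟩
  invFun A := ⟨A.1.submatrix e e, A.2.submatrix _⟩
  left_inv A := Subtype.ext (by ext; simp)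
  right_inv A := Subtype.ext (by ext; simp)

/-- Translation by a symmetric matrix. -/
def SymMat.subRight {ι R : Type*} [AddGroup R] (K : Matrix ι ι R) (hK : K.IsSymm) :
    SymMat ι R ≃ SymMat ι R where
  toFun A := ⟨A.1 - K, A.2.sub hK⟩
  invFun A := ⟨A.1 + K, A.2.add hK⟩
  left_inv A := Subtype.ext (by ext; simp)
  right_inv A := Subtype.ext (by ext; simp)

open scoped Classical in
/-- The indicator of the elements not divisible by `π ^ m`. -/
noncomputable def nonDvd {R : Type*} [CommRing R] (π : R) (m : ℕ) (x : R) : ℝ :=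
  if π ^ m ∣ x then 0 else 1

theorem nonDvd_unit_mul {R : Type*} [CommRing R] (π : R) (m : ℕ) {u : R} (hu : IsUnit u) (x : R) :
    nonDvd π m (u * x) = nonDvd π m x := by
  unfold nonDvd
  congr 1
  exact propext hu.dvd_mul_left

/-- The number of symmetric matrices with determinant not divisible by `π ^ m`. -/
noncomputable def detCount (ι : Type*) {R : Type*} [Fintype ι] [DecidableEq ι] [CommRing R]
    [Fintype R] (π : R) (m : ℕ) : ℝ :=
  ∑ A : SymMat ι R, nonDvd π m A.1.det

theorem sum_symMat_bordered {ι R : Type*} [Fintype ι] [DecidableEq ι] [Fintype R]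
    (f : Matrix (Unit ⊕ ι) (Unit ⊕ ι) R → ℝ) :
    ∑ A : SymMat (Unit ⊕ ι) R, f A.1 =
      ∑ a : R, ∑ v : ι → R, ∑ B : SymMat ι R, f (bordered a v B.1) := by
  rw [← (borderedEquiv ι R).sum_comp]
  simp only [Fintype.sum_prod_type]
  rfl

theorem sum_symMat_reindex {ι κ R : Type*} [Finite ι] [Finite κ] [Finite R]
    (e : ι ≃ κ) (f : Matrix κ κ R → ℝ) :
    ∑ A : SymMat ι R, f (A.1.submatrix e.symm e.symm) = ∑ A : SymMat κ R, f A.1 :=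
  (SymMat.reindex R e).sum_comp (fun A => f A.1)

section Counting

variable {ι κ R : Type*} [Fintype ι] [DecidableEq ι] [Fintype κ] [DecidableEq κ] [CommRing R]
  [Fintype R]

theorem detCount_congr (e : ι ≃ κ) (π : R) (m : ℕ) : detCount ι π m = detCount κ π m := by
  unfold detCount
  rw [← sum_symMat_reindex e fun A => nonDvd π m A.det]
  simp

theorem sum_fromBlocks (π : R) (m : ℕ) (M : Matrix κ κ R) (hM : IsUnit M.det) (N : Matrix κ ι R)
    (N' : Matrix ι κ R) (h : (N' * M⁻¹ * N).IsSymm) :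
    ∑ C : SymMat ι R, nonDvd π m (fromBlocks M N N' C.1).det = detCount ι π m := by
  unfold detCount
  rw [← (SymMat.subRight _ h).sum_comp fun C => nonDvd π m C.1.det]
  refine Finset.sum_congr rfl fun C _ => ?_
  have := M.invertibleOfIsUnitDet hM
  rw [det_fromBlocks₁₁, nonDvd_unit_mul _ _ hM, invOf_eq_nonsing_inv]
  rfl

theorem sum_bordered_of_isUnit (π : R) (m : ℕ) {a : R} (ha : IsUnit a) (v : ι → R) :
    ∑ B : SymMat ι R, nonDvd π m (bordered a v B.1).det = detCount ι π m := by
  refine sum_fromBlocks π m _ (by simpa using ha) _ _ ?_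
  have h1 : (of fun _ _ : Unit => a)ᵀ = of fun _ _ : Unit => a := by ext; rfl
  have h2 : (of fun _ j => v j : Matrix Unit ι R)ᵀ = of fun i _ => v i := by ext; rfl
  have h3 : (of fun i _ => v i : Matrix ι Unit R)ᵀ = of fun _ j => v j := by ext; rfl
  simp only [Matrix.IsSymm, transpose_mul, transpose_nonsing_inv, h1, h2, h3, Matrix.mul_assoc]

theorem sum_bordered_of_isUnit_border [IsLocalRing R] (π : R) (m : ℕ) {k : ℕ} {a : R}
    (ha : ¬ IsUnit a) (v : Fin (k + 1) → R) (hv : ∃ i, IsUnit (v i)) :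
    ∑ B : SymMat (Fin (k + 1)) R, nonDvd π m (bordered a v B.1).det =
      (Fintype.card R : ℝ) ^ (k + 1) * detCount (Fin k) π m := by
  obtain ⟨i, hi⟩ := hv
  obtain ⟨e, he⟩ : ∃ e : Fin (k + 1) ≃ Unit ⊕ Fin k, e.symm (.inl ()) = i := by
    have e : Fin (k + 1) ≃ Unit ⊕ Fin k := Fintype.equivOfCardEq (by simp [add_comm])
    exact ⟨(Equiv.swap i (e.symm (.inl ()))).trans e, by simp⟩
  have h1 : ∀ B : SymMat (Fin (k + 1)) R, nonDvd π m (bordered a v B.1).det =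
      nonDvd π m (bordered a (v ∘ e.symm) (B.1.submatrix e.symm e.symm)).det := by
    intro B
    rw [← det_submatrix_equiv_self (Equiv.sumCongr (Equiv.refl Unit) e).symm (bordered a v B.1)]
    congr 2
    ext (i | i) (j | j) <;> rfl
  simp only [h1]
  rw [sum_symMat_reindex e (fun B => nonDvd π m (bordered a (v ∘ e.symm) B).det),
    sum_symMat_bordered (fun B => nonDvd π m (bordered a (v ∘ e.symm) B).det)]
  have h2 : ∀ (b : R) (w : Fin k → R), ∑ C : SymMat (Fin k) R,
      nonDvd π m (bordered a (v ∘ e.symm) (bordered b w C.1)).det = detCount (Fin k) π m := by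
    intro b w
    let M : Matrix (Unit ⊕ Unit) (Unit ⊕ Unit) R := bordered a (fun _ => v i) (of fun _ _ => b)
    let N : Matrix (Unit ⊕ Unit) (Fin k) R :=
      of fun s j => Sum.elim (fun _ => v (e.symm (.inr j))) (fun _ => w j) s
    have hMs : Mᵀ = M := bordered_isSymm _ _ (by ext; rfl)
    have hM : IsUnit M.det := by
      have : M.det = a * b - v i * v i := by
        rw [← det_submatrix_equiv_self (finSumFinEquiv.symm.trans
          (Equiv.sumCongr (Equiv.ofUnique (Fin 1) Unit) (Equiv.ofUnique (Fin 1) Unit))), det_fin_two]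
        rfl
      rw [this]
      by_contra hc
      have h3 : a * b ∈ nonunits R := fun h => ha (isUnit_of_mul_isUnit_left h)
      have := IsLocalRing.nonunits_add h3
        (show -(a * b - v i * v i) ∈ nonunits R from fun h => hc (IsUnit.neg_iff _ |>.1 h))
      exact this (by simpa using hi)
    rw [← sum_fromBlocks π m M hM N Nᵀ (by
      simp only [Matrix.IsSymm, transpose_mul, transpose_nonsing_inv, transpose_transpose,
        hMs, Matrix.mul_assoc])]
    refine Finset.sum_congr rfl fun C _ => ?_
    rw [← det_submatrix_equiv_self (Equiv.sumAssoc Unit Unit (Fin k))]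
    congr 2
    subst he
    ext ((i | i) | i) ((j | j) | j) <;> rfl
  simp only [h2]
  simp [pow_succ]
  ring

end Counting

theorem sum_pi_of_sum {X Y : Type*} [Fintype X] [Fintype Y] (w : X → ℝ) (ψ : Y → X) (r : ℝ)
    (h : ∀ f : X → ℝ, ∑ x, w x * f x = r * ∑ y, f (ψ y)) (n : ℕ) (f : (Fin n → X) → ℝ) :
    ∑ v : Fin n → X, (∏ i, w (v i)) * f v = r ^ n * ∑ v : Fin n → Y, f (ψ ∘ v) := by
  induction n with
  | zero =>
    simp only [Finset.univ_unique, Finset.sum_singleton, Finset.univ_eq_empty,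
      Finset.prod_empty, pow_zero]
    congr 2
    exact Subsingleton.elim _ _
  | succ n ih =>
    rw [← (Fin.consEquiv fun _ => X).sum_comp, ← (Fin.consEquiv fun _ => Y).sum_comp]
    simp only [Fintype.sum_prod_type, Fin.consEquiv_apply, Fin.prod_univ_succ, Fin.cons_zero,
      Fin.cons_succ, mul_assoc, ← Finset.mul_sum]
    have h1 : ∀ (y : Y) (v : Fin n → Y),
        ψ ∘ (Fin.consEquiv fun _ => Y) (y, v) = (Fin.consEquiv fun _ => X) (ψ y, ψ ∘ v) := by
      intro y v
      ext i
      refine Fin.cases rfl (fun i => rfl) i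
    simp only [ih, h, h1, pow_succ]
    rw [← Finset.mul_sum]
    ring

open scoped Classical in
/-- The indicator of the nonunits. -/
noncomputable def nonunitInd {R : Type*} [CommRing R] (x : R) : ℝ := if IsUnit x then 0 else 1

theorem prod_nonunitInd {R : Type*} [CommRing R] {n : ℕ} (v : Fin n → R)
    [Decidable (∃ i, IsUnit (v i))] :
    ∏ i, nonunitInd (v i) = if ∃ i, IsUnit (v i) then 0 else 1 := by
  split_ifs with hv
  · obtain ⟨i, hi⟩ := hv
    exact Finset.prod_eq_zero (Finset.mem_univ i) (by simp [nonunitInd, hi])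
  · push Not at hv
    exact Finset.prod_eq_one fun i _ => by simp [nonunitInd, hv i]

theorem det_fromBlocks_smul_row {ι R : Type*} [Fintype ι] [DecidableEq ι] [CommRing R] (π : R)
    (X : Matrix Unit Unit R) (Y : Matrix Unit ι R) (Z : Matrix ι Unit R) (W : Matrix ι ι R) :
    (fromBlocks (π • X) (π • Y) Z W).det = π * (fromBlocks X Y Z W).det := by
  have : fromBlocks (π • X) (π • Y) Z W =
      fromBlocks (π • (1 : Matrix Unit Unit R)) 0 0 1 * fromBlocks X Y Z W := by
    simp [fromBlocks_multiply]
  rw [this, det_mul]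
  simp

theorem det_fromBlocks_smul_col {ι R : Type*} [Fintype ι] [DecidableEq ι] [CommRing R] (π : R)
    (X : Matrix Unit Unit R) (Y : Matrix Unit ι R) (Z : Matrix ι Unit R) (W : Matrix ι ι R) :
    (fromBlocks (π • X) Y (π • Z) W).det = π * (fromBlocks X Y Z W).det := by
  rw [← det_transpose, fromBlocks_transpose, transpose_smul, transpose_smul,
    det_fromBlocks_smul_row, ← fromBlocks_transpose, det_transpose]

theorem det_bordered_mul {ι R : Type*} [Fintype ι] [DecidableEq ι] [CommRing R] (π a : R) (v : ι → R)
    (B : Matrix ι ι R) :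
    (bordered (π * (π * a)) (fun i => π * v i) B).det = π * (π * (bordered a v B).det) := by
  unfold bordered
  rw [← det_fromBlocks_smul_col, ← det_fromBlocks_smul_row]
  rfl

section Recurrence

variable {R : Type*} [CommRing R] [Fintype R]

theorem sum_eq_unit_add_nonunit (π : R) (q : ℝ)
    (h : ∀ f : R → ℝ, ∑ a, nonunitInd a * f a = q * ∑ x, f (π * x)) (g f : R → ℝ) (s : ℝ)
    (hs : ∀ a, IsUnit a → g a = s) (hf : ∀ a, ¬ IsUnit a → g a = f a) :
    ∑ a, g a = (1 - q) * Fintype.card R * s + q * ∑ x, f (π * x) := by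
  have h1 : ∀ a, g a = s - nonunitInd a * s + nonunitInd a * f a := by
    intro a
    by_cases ha : IsUnit a
    · simp [nonunitInd, ha, hs a ha]
    · simp [nonunitInd, ha, hf a ha]
  simp only [h1, Finset.sum_add_distrib, Finset.sum_sub_distrib, h]
  simp
  ring

theorem detCount_fin_succ (π : R) (m n : ℕ) :
    detCount (Fin (n + 1)) π m =
      ∑ a : R, ∑ v : Fin n → R, ∑ B : SymMat (Fin n) R, nonDvd π m (bordered a v B.1).det := by
  rw [detCount_congr (Fintype.equivOfCardEq (by simp [add_comm]) : Fin (n + 1) ≃ Unit ⊕ Fin n),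
    detCount, sum_symMat_bordered fun A => nonDvd π m A.det]

theorem sum_bordered_mul_of_isUnit {ι : Type*} [Fintype ι] [DecidableEq ι] (π : R) (m : ℕ)
    (hm : ∀ x, nonDvd π m (π * x) = nonDvd π (m - 1) x) {a : R} (ha : IsUnit a) (v : ι → R) :
    ∑ B : SymMat ι R, nonDvd π m (bordered (π * a) (fun i => π * v i) B.1).det =
      detCount ι π (m - 1) := by
  let M : Matrix Unit Unit R := of fun _ _ => a
  let N : Matrix Unit ι R := of fun _ j => v j
  have hM : Mᵀ = M := by ext; rfl
  rw [← sum_fromBlocks π (m - 1) M (by simpa [M] using ha) N (π • Nᵀ) (by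
    simp only [Matrix.IsSymm, transpose_mul, transpose_nonsing_inv, transpose_smul, hM,
      transpose_transpose, Matrix.mul_assoc, Matrix.smul_mul])]
  refine Finset.sum_congr rfl fun B _ => ?_
  rw [← hm, ← det_fromBlocks_smul_row]
  rfl

theorem detCount_succ [IsLocalRing R] (π : R) (q : ℝ)
    (h : ∀ f : R → ℝ, ∑ a, nonunitInd a * f a = q * ∑ x, f (π * x)) (m n : ℕ)
    (hm : ∀ x, nonDvd π m (π * x) = nonDvd π (m - 1) x)
    (hm' : ∀ x, nonDvd π (m - 1) (π * x) = nonDvd π (m - 2) x) :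
    detCount (Fin (n + 1)) π m =
      (1 - q) * (Fintype.card R : ℝ) ^ (n + 1) * detCount (Fin n) π m +
      q * (1 - q ^ n) * (Fintype.card R : ℝ) ^ (2 * n + 1) * detCount (Fin (n - 1)) π m +
      q ^ (n + 1) * (1 - q) * (Fintype.card R : ℝ) ^ (n + 1) * detCount (Fin n) π (m - 1) +
      q ^ (n + 2) * detCount (Fin (n + 1)) π (m - 2) := by
  classical
  set c : ℝ := (Fintype.card R : ℝ)
  set G : R → (Fin n → R) → ℝ := fun a v =>
    ∑ B : SymMat (Fin n) R, nonDvd π m (bordered a v B.1).det with hG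
  have hvec := sum_pi_of_sum nonunitInd (fun x => π * x) q h n
  have hborder : ∀ a, ¬ IsUnit a → ∑ v, G a v =
      q ^ n * ∑ v : Fin n → R, G a (fun i => π * v i) +
        (1 - q ^ n) * c ^ (2 * n) * detCount (Fin (n - 1)) π m := by
    intro a ha
    have h1 : ∀ v, G a v = (∏ i, nonunitInd (v i)) * G a v +
        (c ^ n * detCount (Fin (n - 1)) π m -
          (∏ i, nonunitInd (v i)) * (c ^ n * detCount (Fin (n - 1)) π m)) := by
      intro v
      rw [prod_nonunitInd]
      split_ifs with hv
      · obtain ⟨k, rfl⟩ : ∃ k, n = k + 1 := ⟨n - 1, by have := hv.choose.pos; omega⟩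
        simp only [hG, sum_bordered_of_isUnit_border π m ha v hv]
        simp [c]
      · ring
    rw [Finset.sum_congr rfl fun v _ => h1 v]
    rw [Finset.sum_add_distrib, Finset.sum_sub_distrib, hvec, hvec]
    simp only [Finset.sum_const, Finset.card_univ, Fintype.card_pi_const, nsmul_eq_mul,
      Nat.cast_pow, Function.comp_def]
    ring
  have hdouble : ∑ x : R, ∑ v : Fin n → R, G (π * x) (fun i => π * v i) =
      (1 - q) * c * (c ^ n * detCount (Fin n) π (m - 1)) +
        q * detCount (Fin (n + 1)) π (m - 2) := by
    rw [sum_eq_unit_add_nonunit π q h _ (fun x => ∑ v : Fin n → R, G (π * x) (fun i => π * v i))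
      (c ^ n * detCount (Fin n) π (m - 1)) ?_ fun _ _ => rfl]
    · rw [detCount_fin_succ]
      simp only [hG, det_bordered_mul, hm, hm']
      rfl
    · intro a ha
      simp only [hG, sum_bordered_mul_of_isUnit π m hm ha]
      simp [c]
  rw [detCount_fin_succ,
    sum_eq_unit_add_nonunit π q h _ _ (c ^ n * detCount (Fin n) π m) ?_ hborder]
  · rw [Finset.sum_add_distrib, ← Finset.mul_sum, hdouble]
    simp only [Finset.sum_const, Finset.card_univ, nsmul_eq_mul]
    ring
  · intro a ha
    simp only [hG, sum_bordered_of_isUnit π m ha]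
    simp [c]

end Recurrence

theorem sum_range_indicator {G H : Type*} [AddCommGroup G] [AddCommGroup H] [Fintype G] [Fintype H]
    (φ : G →+ H) (w : H → ℝ) (h1 : ∀ g, w (φ g) = 1) (h0 : ∀ x, x ∉ Set.range φ → w x = 0)
    (f : H → ℝ) : ∑ x, w x * f x = (∑ x, w x) / Fintype.card G * ∑ g, f (φ g) := by
  classical
  set k : ℝ := ((Finset.univ.filter fun g => φ g = 0).card : ℝ)
  have key : ∀ f : H → ℝ, ∑ g, f (φ g) = k * ∑ x, w x * f x := by
    intro f
    rw [← Finset.sum_fiberwise Finset.univ φ, Finset.mul_sum]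
    refine Finset.sum_congr rfl fun x _ => ?_
    rw [Finset.sum_congr rfl (g := fun _ => f x) (by simp +contextual), Finset.sum_const,
      nsmul_eq_mul]
    by_cases hx : x ∈ Set.range φ
    · have hw : w x = 1 := by obtain ⟨g, rfl⟩ := hx; exact h1 g
      rw [hw, one_mul, AddMonoidHom.card_fiber_eq_of_mem_range φ hx ⟨0, map_zero φ⟩]
    · have : (Finset.univ.filter fun g => φ g = x) = ∅ :=
        Finset.filter_eq_empty_iff.2 fun g _ hg => hx ⟨g, hg⟩
      simp [this, h0 x hx]
  have hcard : (Fintype.card G : ℝ) = k * ∑ x, w x := by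
    simpa using key fun _ => 1
  have hne : (Fintype.card G : ℝ) ≠ 0 := by simp
  rw [div_mul_eq_mul_div, eq_div_iff hne, key f, hcard]
  ring

section ZModPrimePow

variable {p : ℕ}

theorem natCast_pow_dvd_natCast_iff {N m : ℕ} (hm : m ≤ N) (k : ℕ) :
    (p : ZMod (p ^ N)) ^ m ∣ (k : ZMod (p ^ N)) ↔ p ^ m ∣ k := by
  constructor
  · intro h
    have := map_dvd (ZMod.castHom (pow_dvd_pow p hm) (ZMod (p ^ m))) h
    simp only [map_pow, map_natCast] at this
    rwa [← Nat.cast_pow, ZMod.natCast_self, zero_dvd_iff, ZMod.natCast_eq_zero_iff] at this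
  · intro h
    exact_mod_cast Nat.cast_dvd_cast (α := ZMod (p ^ N)) h

theorem isUnit_iff_not_natCast_dvd (hp : p.Prime) {N : ℕ} (hN : 1 ≤ N) (x : ZMod (p ^ N)) :
    IsUnit x ↔ ¬ (p : ZMod (p ^ N)) ∣ x := by
  have : NeZero (p ^ N) := ⟨pow_ne_zero _ hp.ne_zero⟩
  obtain ⟨k, rfl⟩ := ZMod.natCast_zmod_surjective x
  have h := natCast_pow_dvd_natCast_iff (p := p) hN k
  rw [pow_one, pow_one] at h
  rw [h, ZMod.isUnit_iff_coprime, Nat.coprime_pow_right_iff (by omega), Nat.coprime_comm,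
    hp.coprime_iff_not_dvd]

theorem isLocalRing_zmod_prime_pow (hp : p.Prime) {N : ℕ} (hN : 1 ≤ N) :
    IsLocalRing (ZMod (p ^ N)) := by
  have : Fact (1 < p ^ N) := ⟨Nat.one_lt_pow (by omega) hp.one_lt⟩
  refine IsLocalRing.of_nonunits_add fun a b ha hb => ?_
  rw [mem_nonunits_iff, isUnit_iff_not_natCast_dvd hp hN, not_not] at *
  exact dvd_add ha hb

theorem nonDvd_natCast_mul (hp : p.Prime) {N m : ℕ} (hm : m ≤ N) (x : ZMod (p ^ N)) :
    nonDvd (p : ZMod (p ^ N)) m (p * x) = nonDvd (p : ZMod (p ^ N)) (m - 1) x := by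
  have : NeZero (p ^ N) := ⟨pow_ne_zero _ hp.ne_zero⟩
  obtain ⟨k, rfl⟩ := ZMod.natCast_zmod_surjective x
  unfold nonDvd
  congr 1
  rw [← Nat.cast_mul, natCast_pow_dvd_natCast_iff hm, natCast_pow_dvd_natCast_iff (by omega)]
  rcases m with _ | m
  · simp
  · rw [pow_succ', Nat.mul_dvd_mul_iff_left hp.pos, Nat.add_sub_cancel]

theorem sum_nonunitInd_mul (hp : p.Prime) {N : ℕ} (hN : 1 ≤ N) [NeZero (p ^ N)]
    (f : ZMod (p ^ N) → ℝ) :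
    ∑ a, nonunitInd a * f a = 1 / (p : ℝ) * ∑ x, f (p * x) := by
  classical
  have hp0 : (p : ℝ) ≠ 0 := by exact_mod_cast hp.ne_zero
  have hcount : ∑ a : ZMod (p ^ N), nonunitInd a = (p : ℝ) ^ (N - 1) := by
    have h1 : ∀ a : ZMod (p ^ N), nonunitInd a = 1 - if IsUnit a then 1 else 0 := by
      intro a
      unfold nonunitInd
      split_ifs <;> simp
    have h2 : (Finset.univ.filter fun a : ZMod (p ^ N) => IsUnit a).card = p ^ (N - 1) * (p - 1) := by
      rw [← Nat.totient_prime_pow hp hN, ← ZMod.card_units_eq_totient, ← Fintype.card_subtype]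
      exact (Fintype.card_of_bijective (f := fun u : (ZMod (p ^ N))ˣ =>
        (⟨u, u.isUnit⟩ : {a : ZMod (p ^ N) // IsUnit a}))
        ⟨fun u v huv => Units.ext (congrArg Subtype.val huv), fun a => ⟨a.2.unit, rfl⟩⟩).symm
    rw [Finset.sum_congr rfl fun a _ => h1 a, Finset.sum_sub_distrib, Finset.sum_boole, h2]
    obtain ⟨M, rfl⟩ : ∃ M, N = M + 1 := ⟨N - 1, by omega⟩
    simp [ZMod.card, Nat.cast_sub hp.one_le]
    ring
  have := sum_range_indicator (AddMonoidHom.mulLeft (p : ZMod (p ^ N))) nonunitInd ?_ ?_ f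
  · rw [this, hcount, ZMod.card]
    congr 1
    obtain ⟨M, rfl⟩ : ∃ M, N = M + 1 := ⟨N - 1, by omega⟩
    rw [Nat.add_sub_cancel, pow_succ]
    push_cast
    field_simp
  · intro g
    have : ¬ IsUnit ((p : ZMod (p ^ N)) * g) := by
      rw [isUnit_iff_not_natCast_dvd hp hN, not_not]
      exact dvd_mul_right _ _
    simp [nonunitInd, this]
  · intro x hx
    have : IsUnit x := by
      rw [isUnit_iff_not_natCast_dvd hp hN]
      rintro ⟨y, rfl⟩
      exact hx ⟨y, rfl⟩
    simp [nonunitInd, this]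

theorem succ_triangle (n : ℕ) : (n + 1) * (n + 1 + 1) / 2 = n * (n + 1) / 2 + (n + 1) := by
  rw [show (n + 1) * (n + 1 + 1) = n * (n + 1) + (n + 1) * 2 by ring,
    Nat.add_mul_div_right _ _ two_pos]

theorem sum_symMat_fin_succ {X : Type*} [Fintype X] (n : ℕ)
    (f : Matrix (Fin (n + 1)) (Fin (n + 1)) X → ℝ) :
    ∑ A : SymMat (Fin (n + 1)) X, f A.1 = ∑ a : X, ∑ v : Fin n → X, ∑ B : SymMat (Fin n) X,
      f ((bordered a v B.1).submatrix
        (Fintype.equivOfCardEq (by simp [add_comm]) : Fin (n + 1) ≃ Unit ⊕ Fin n)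
        (Fintype.equivOfCardEq (by simp [add_comm]) : Fin (n + 1) ≃ Unit ⊕ Fin n)) := by
  set e : Fin (n + 1) ≃ Unit ⊕ Fin n := Fintype.equivOfCardEq (by simp [add_comm])
  rw [← sum_symMat_bordered fun A => f (A.submatrix e e)]
  exact (sum_symMat_reindex e.symm f).symm

theorem sum_symMat_map {X Y : Type*} [Fintype X] [Fintype Y] (ψ : Y → X) (r : ℝ)
    (h : ∀ f : X → ℝ, ∑ x, f x = r * ∑ y, f (ψ y)) (n : ℕ)
    (f : Matrix (Fin n) (Fin n) X → ℝ) :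
    ∑ A : SymMat (Fin n) X, f A.1 =
      r ^ (n * (n + 1) / 2) * ∑ A : SymMat (Fin n) Y, f (A.1.map ψ) := by
  induction n with
  | zero =>
    rw [Fintype.sum_subsingleton _ ⟨of fun i => i.elim0, by ext i; exact i.elim0⟩,
      Fintype.sum_subsingleton _ ⟨of fun i => i.elim0, by ext i; exact i.elim0⟩]
    simp only [zero_add, mul_one, Nat.zero_div, pow_zero, one_mul]
    congr 1
    exact Subsingleton.elim _ _
  | succ n ih =>
    have hv : ∀ g : (Fin n → X) → ℝ, ∑ v, g v = r ^ n * ∑ v : Fin n → Y, g (ψ ∘ v) := by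
      intro g
      simpa using sum_pi_of_sum (fun _ => 1) ψ r (by simpa using h) n g
    rw [sum_symMat_fin_succ, sum_symMat_fin_succ n fun A : Matrix _ _ Y => f (A.map ψ),
      succ_triangle, h, pow_add, pow_succ]
    set e : Fin (n + 1) ≃ Unit ⊕ Fin n := Fintype.equivOfCardEq (by simp [add_comm])
    have hmap : ∀ (a : Y) (v : Fin n → Y) (B : Matrix (Fin n) (Fin n) Y),
        ((bordered a v B).submatrix e e).map ψ =
          (bordered (ψ a) (ψ ∘ v) (B.map ψ)).submatrix e e := by
      intro a v B
      ext i j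
      simp only [map_apply, submatrix_apply]
      rcases e i with i | i <;> rcases e j with j | j <;> rfl
    have hinner : ∀ y, (∑ v : Fin n → X, ∑ B : SymMat (Fin n) X,
        f ((bordered (ψ y) v B.1).submatrix e e)) = r ^ n * (r ^ (n * (n + 1) / 2) *
          ∑ v : Fin n → Y, ∑ B : SymMat (Fin n) Y,
            f (((bordered y v B.1).submatrix e e).map ψ)) := by
      intro y
      rw [hv]
      simp only [fun v => ih fun B => f ((bordered (ψ y) v B).submatrix e e), hmap,
        Finset.mul_sum]
    simp only [hinner, ← Finset.mul_sum]
    ring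

theorem Psym_eq_detCount (hp : p.Prime) {N m : ℕ} (hm : m ≤ N) [NeZero (p ^ N)] (n : ℕ) :
    Psym n (p ^ m) =
      detCount (Fin n) (p : ZMod (p ^ N)) m / ((p : ℝ) ^ N) ^ (n * (n + 1) / 2) := by
  classical
  have : NeZero (p ^ m) := ⟨pow_ne_zero _ hp.ne_zero⟩
  have hp0 : (p : ℝ) ≠ 0 := by exact_mod_cast hp.ne_zero
  set φ := ZMod.castHom (pow_dvd_pow p hm) (ZMod (p ^ m))
  have hsum : ∀ f : ZMod (p ^ m) → ℝ, ∑ x, f x = (p : ℝ) ^ m / (p : ℝ) ^ N * ∑ y, f (φ y) := by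
    intro f
    simpa using sum_range_indicator φ.toAddMonoidHom (fun _ => 1) (fun _ => rfl)
      (fun x hx => absurd (ZMod.castHom_surjective (pow_dvd_pow p hm) x) hx) f
  have hN : (Nsym n (p ^ m) : ℝ) =
      ∑ A : SymMat (Fin n) (ZMod (p ^ m)), if A.1.det ≠ 0 then 1 else 0 := by
    rw [Finset.sum_boole, ← Fintype.card_subtype, ← Nat.card_eq_fintype_card, Nsym]
    congr 1
    exact (Nat.card_congr (Equiv.subtypeSubtypeEquivSubtypeInter _
      fun A : Matrix (Fin n) (Fin n) (ZMod (p ^ m)) => A.det ≠ 0)).symm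
  have hker : ∀ x, (if φ x ≠ 0 then (1 : ℝ) else 0) = nonDvd (p : ZMod (p ^ N)) m x := by
    intro x
    obtain ⟨k, rfl⟩ := ZMod.natCast_zmod_surjective x
    unfold nonDvd
    simp only [map_natCast, ne_eq, ZMod.natCast_eq_zero_iff, ite_not,
      natCast_pow_dvd_natCast_iff hm]
  have hdet : ∀ A : SymMat (Fin n) (ZMod (p ^ N)), (A.1.map φ).det = φ A.1.det := fun A =>
    (φ.map_det A.1).symm
  rw [Psym, hN, sum_symMat_map φ _ hsum n fun A => if A.det ≠ 0 then 1 else 0, detCount]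
  simp only [hdet, hker]
  push_cast
  rw [div_pow]
  field_simp

end ZModPrimePow

theorem Psym_one (n : ℕ) : Psym n 1 = 0 := by
  have : IsEmpty {A : Matrix (Fin n) (Fin n) (ZMod 1) // A.IsSymm ∧ A.det ≠ 0} :=
    ⟨fun A => A.2.2 (Subsingleton.elim _ _)⟩
  simp [Psym, Nsym]

theorem Psym_recurrence {p : ℕ} (hp : p.Prime) (q : ℝ) (hq : q = 1 / p) (n m : ℕ) :
    Psym (n + 1) (p ^ m) = (1 - q) * Psym n (p ^ m) + q * (1 - q ^ n) * Psym (n - 1) (p ^ m) +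
      q ^ (n + 1) * (1 - q) * Psym n (p ^ (m - 1)) +
      q ^ (n + 2) * Psym (n + 1) (p ^ (m - 2)) := by
  rcases Nat.eq_zero_or_pos m with rfl | hm
  · simp [Psym_one]
  have : NeZero (p ^ m) := ⟨pow_ne_zero _ hp.ne_zero⟩
  have := isLocalRing_zmod_prime_pow hp hm
  have hc : (p : ℝ) ^ m ≠ 0 := pow_ne_zero _ (by exact_mod_cast hp.ne_zero)
  rw [Psym_eq_detCount hp le_rfl, Psym_eq_detCount hp le_rfl, Psym_eq_detCount hp le_rfl,
    Psym_eq_detCount hp (Nat.sub_le m 1), Psym_eq_detCount hp (Nat.sub_le m 2),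
    detCount_succ (p : ZMod (p ^ m)) q (by rw [hq]; exact sum_nonunitInd_mul hp hm) m n
      (nonDvd_natCast_mul hp le_rfl) (nonDvd_natCast_mul hp (Nat.sub_le m 1)), ZMod.card]
  push_cast
  set c : ℝ := (p : ℝ) ^ m
  rcases n with _ | n
  · simp only [succ_triangle]
    field_simp
    simp
  · simp only [succ_triangle, Nat.add_sub_cancel]
    field_simp
    ring

section Series

open PowerSeries

/-- The generating series of `Psym n (p ^ m)` in `m`. -/
noncomputable def PsymSeries (p n : ℕ) : PowerSeries ℝ := PowerSeries.mk fun m => Psym n (p ^ m)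

theorem PsymSeries_recurrence {p : ℕ} (hp : p.Prime) (q : ℝ) (hq : q = 1 / p) (n : ℕ) :
    (1 - C q ^ (n + 2) * X ^ 2) * PsymSeries p (n + 1) =
      (1 - C q) * (1 + C q ^ (n + 1) * X) * PsymSeries p n +
        C q * (1 - C q ^ n) * PsymSeries p (n - 1) := by
  have : PsymSeries p (n + 1) = C (1 - q) * PsymSeries p n +
      C (q * (1 - q ^ n)) * PsymSeries p (n - 1) +
      C (q ^ (n + 1) * (1 - q)) * (X * PsymSeries p n) +
      C (q ^ (n + 2)) * (X * (X * PsymSeries p (n + 1))) := by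
    ext m
    simp only [map_add, coeff_C_mul]
    rcases m with _ | _ | m
    · simp [PsymSeries, Psym_one]
    · have := Psym_recurrence hp q hq n 1
      simpa [PsymSeries, coeff_succ_X_mul, Psym_one] using this
    · have := Psym_recurrence hp q hq n (m + 2)
      simpa [PsymSeries, coeff_succ_X_mul] using this
  simp only [map_sub, map_mul, map_pow, map_one] at this
  linear_combination this

theorem one_sub_mul_X_pow_ne_zero (c : PowerSeries ℝ) {k : ℕ} (hk : k ≠ 0) :
    1 - c * X ^ k ≠ 0 := by
  intro h
  have := congrArg constantCoeff h
  simp [hk] at this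

theorem PsymSeries_odd {p : ℕ} (hp : p.Prime) (q : ℝ) (hq : q = 1 / p) (k : ℕ) :
    (1 - C q ^ (2 * k + 1)) * PsymSeries p (2 * k) =
      (1 - C q ^ (2 * k + 1) * X) * PsymSeries p (2 * k + 1) ∧
    (1 - C q ^ (2 * k + 3) * X ^ 2) * PsymSeries p (2 * k + 3) =
      (1 - C q ^ (2 * k + 3)) * PsymSeries p (2 * k + 1) := by
  have step : ∀ k, (1 - C q ^ (2 * k + 1)) * PsymSeries p (2 * k) =
      (1 - C q ^ (2 * k + 1) * X) * PsymSeries p (2 * k + 1) →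
      (1 - C q ^ (2 * k + 3) * X ^ 2) * PsymSeries p (2 * k + 2) =
        (1 - C q ^ (2 * k + 3) * X) * PsymSeries p (2 * k + 1) ∧
      (1 - C q ^ (2 * k + 3) * X ^ 2) * PsymSeries p (2 * k + 3) =
        (1 - C q ^ (2 * k + 3)) * PsymSeries p (2 * k + 1) := by
    intro k hk
    have h1 := PsymSeries_recurrence hp q hq (2 * k + 1)
    have h2 := PsymSeries_recurrence hp q hq (2 * k + 2)
    simp only [Nat.add_sub_cancel, show 2 * k + 2 - 1 = 2 * k + 1 from rfl, add_assoc,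
      Nat.reduceAdd] at h1 h2
    have h3 : (1 - C q ^ (2 * k + 3) * X ^ 2) * PsymSeries p (2 * k + 2) =
        (1 - C q ^ (2 * k + 3) * X) * PsymSeries p (2 * k + 1) := by
      linear_combination h1 + C q * hk
    refine ⟨h3, mul_left_cancel₀ (one_sub_mul_X_pow_ne_zero (C q ^ (2 * k + 4)) two_ne_zero) ?_⟩
    linear_combination (1 - C q ^ (2 * k + 3) * X ^ 2) * h2 +
      (1 - C q) * (1 + C q ^ (2 * k + 3) * X) * h3
  have main : (1 - C q ^ (2 * k + 1)) * PsymSeries p (2 * k) =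
      (1 - C q ^ (2 * k + 1) * X) * PsymSeries p (2 * k + 1) := by
    induction k with
    | zero =>
      have h := PsymSeries_recurrence hp q hq 0
      have hne := one_sub_mul_X_pow_ne_zero (-C q) one_ne_zero
      refine mul_left_cancel₀ hne ?_
      simp only [Nat.mul_zero, Nat.zero_add, pow_one, pow_zero] at h ⊢
      linear_combination -h
    | succ k ih =>
      obtain ⟨h1, h2⟩ := step k ih
      refine mul_left_cancel₀ (one_sub_mul_X_pow_ne_zero (C q ^ (2 * k + 3)) two_ne_zero) ?_
      rw [show 2 * (k + 1) = 2 * k + 2 by ring]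
      linear_combination (1 - C q ^ (2 * k + 3)) * h1 - (1 - C q ^ (2 * k + 3) * X) * h2
  exact ⟨main, (step k main).2⟩

end Series

theorem Psym_odd_three_term_recurrence (p : ℕ) (hp : p.Prime) (q : ℝ)
    (hq : q = 1 / p) (n μ : ℕ) (hn : 3 ≤ n) (hodd : Odd n) (hμ : 2 ≤ μ) :
    Psym n (p ^ μ) =
      (1 - q ^ n) * Psym (n - 2) (p ^ μ) + q ^ n * Psym n (p ^ (μ - 2)) := by
  obtain ⟨k, rfl⟩ : ∃ k, n = 2 * k + 3 := by
    obtain ⟨j, rfl⟩ := hodd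
    exact ⟨j - 1, by omega⟩
  obtain ⟨m, rfl⟩ : ∃ m, μ = m + 2 := ⟨μ - 2, by omega⟩
  have h := (PsymSeries_odd hp q hq k).2
  have h' : PsymSeries p (2 * k + 3) =
      PowerSeries.C (1 - q ^ (2 * k + 3)) * PsymSeries p (2 * k + 1) +
        PowerSeries.C (q ^ (2 * k + 3)) *
          (PowerSeries.X * (PowerSeries.X * PsymSeries p (2 * k + 3))) := by
    simp only [map_sub, map_pow, map_one]
    linear_combination h
  have := congrArg (PowerSeries.coeff (m + 2)) h'
  simp only [map_add, PowerSeries.coeff_C_mul, PowerSeries.coeff_succ_X_mul] at this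
  simpa [PsymSeries] using this
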